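/- arXiv:2601.07535 — 2 statements merged into one kernel-verified Lean document; each statement's English description precedes it below -/
import Mathlib

section
/- (Lemma A.3: variance-aware empirical concentration of the KME.) Let 𝒳 be a measurable additive group, H a real separable Hilbert space, and φ : 𝒳 → H a bounded measurable feature map; let g(x,y) := ⟨φ(x), φ(y)⟩ be translation invariant with range g̃ := sup g − inf g. Let ν be a probability measure on 𝒳 with kernel mean embedding μ_ν := E_{X∼ν}[φ(X)]. Let X_1,…,X_n be i.i.d. with law ν, n ≥ 2, and define μ̂ := (1/n)Σ_{t=1}^n φ(X_t) and 𝒱̂ := (1/(n−1)) Σ_{t=1}^n ( g(X_t,X_t) − (1/n)Σ_{s=1}^n g(X_t,X_s) ). Then for every δ' ∈ (0,1], with probability at least 1 − δ', ‖μ̂ − μ_ν‖ ≤ √(2·𝒱̂·log(4/δ')/n) + (16/3)·√g̃·log(4/δ')/n. -/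
open MeasureTheory ProbabilityTheory Finset

noncomputable section

/-- The kernel `g(x,y) = ⟪φ x, φ y⟫` associated with the feature map `φ`. -/
def kerG {𝒳 H : Type*} [NormedAddCommGroup H] [InnerProductSpace ℝ H]
    (φ : 𝒳 → H) (x y : 𝒳) : ℝ :=
  inner ℝ (φ x) (φ y)

/-- The range `g̃ = sup_{x,y} g(x,y) − inf_{x,y} g(x,y)` of the kernel. -/
def kerRange {𝒳 H : Type*} [NormedAddCommGroup H] [InnerProductSpace ℝ H]
    (φ : 𝒳 → H) : ℝ :=
  (⨆ p : 𝒳 × 𝒳, kerG φ p.1 p.2) - (⨅ p : 𝒳 × 𝒳, kerG φ p.1 p.2)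

/-- The kernel mean embedding `μ_ν = E_{X∼ν}[φ(X)]` (a Bochner integral). -/
def KME {𝒳 H : Type*} [MeasurableSpace 𝒳] [NormedAddCommGroup H] [InnerProductSpace ℝ H]
    (φ : 𝒳 → H) (ν : Measure 𝒳) : H :=
  ∫ x, φ x ∂ν

/-- The empirical kernel mean embedding `μ̂ = (1/n) Σ_{t<n} φ(x_t)`. -/
def empKME {𝒳 H : Type*} [NormedAddCommGroup H] [InnerProductSpace ℝ H]
    (φ : 𝒳 → H) (n : ℕ) (x : ℕ → 𝒳) : H :=
  (n : ℝ)⁻¹ • ∑ t ∈ range n, φ (x t)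

/-- The empirical RKHS variance
`𝒱̂ = (1/(n−1)) Σ_{t<n} (g(x_t,x_t) − (1/n) Σ_{s<n} g(x_t,x_s))`. -/
def empVar {𝒳 H : Type*} [NormedAddCommGroup H] [InnerProductSpace ℝ H]
    (φ : 𝒳 → H) (n : ℕ) (x : ℕ → 𝒳) : ℝ :=
  ((n : ℝ) - 1)⁻¹ * ∑ t ∈ range n,
    (kerG φ (x t) (x t) - (n : ℝ)⁻¹ * ∑ s ∈ range n, kerG φ (x t) (x s))


lemma aux_cosh_sqrt_convex (θ p q r : ℝ) (h0 : 0 ≤ θ) (h1 : θ ≤ 1)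
    (h : r ^ 2 = θ * p ^ 2 + (1 - θ) * q ^ 2) :
    Real.cosh r ≤ θ * Real.cosh p + (1 - θ) * Real.cosh q := by
  have hr := Real.hasSum_cosh r
  have hp := (Real.hasSum_cosh p).mul_left θ
  have hq := (Real.hasSum_cosh q).mul_left (1 - θ)
  refine hasSum_le ?_ hr (hp.add hq)
  intro k
  have hc := (convexOn_pow (𝕜 := ℝ) k).2 (Set.mem_Ici.2 (sq_nonneg p)) (Set.mem_Ici.2 (sq_nonneg q))
    h0 (sub_nonneg.2 h1) (by ring)
  simp only [smul_eq_mul] at hc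
  rw [← h, ← pow_mul, ← pow_mul, ← pow_mul] at hc
  have hf : (0:ℝ) < ((2 * k).factorial : ℝ) := by positivity
  rw [mul_div_assoc', mul_div_assoc', ← add_div]
  gcongr

lemma aux_cosh_norm_add {H : Type*} [NormedAddCommGroup H] [InnerProductSpace ℝ H] (x y : H) :
    Real.cosh ‖x + y‖ ≤ Real.cosh ‖x‖ + Real.sinh ‖x‖ / ‖x‖ * inner ℝ x y
      + Real.cosh ‖x‖ * (Real.exp ‖y‖ - 1 - ‖y‖) := by
  have hc : |inner ℝ x y| ≤ ‖x‖ * ‖y‖ := abs_real_inner_le_norm x y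
  have hxy := norm_add_sq_real x y
  set a := ‖x‖ with ha
  set b := ‖y‖ with hb
  set c : ℝ := inner ℝ x y with hcdef
  have ha0 : 0 ≤ a := norm_nonneg _
  have hb0 : 0 ≤ b := norm_nonneg _
  obtain ⟨d, hd1, hd2, hd3⟩ : ∃ d : ℝ, -1 ≤ d ∧ d ≤ 1 ∧ c = d * (a * b) := by
    rcases eq_or_lt_of_le (mul_nonneg ha0 hb0) with h | h
    · rw [← h] at hc ⊢
      exact ⟨0, by norm_num, by norm_num, by simpa using hc⟩
    · have := abs_le.1 hc
      refine ⟨c / (a * b), ?_, ?_, (div_mul_cancel₀ _ h.ne').symm⟩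
      · rw [le_div_iff₀ h]; linarith
      · rw [div_le_iff₀ h]; linarith
  have h1 := aux_cosh_sqrt_convex ((1 + d) / 2) (a + b) (a - b) ‖x + y‖ (by linarith) (by linarith)
    (by rw [hxy, hd3]; ring)
  have h2 : Real.sinh a / a * c = Real.sinh a * (d * b) := by
    rcases eq_or_lt_of_le ha0 with h | h
    · rw [← h]; simp
    · rw [hd3]; field_simp
  rw [h2]
  rw [Real.cosh_add, Real.cosh_sub] at h1
  have hs : b ≤ Real.sinh b := Real.self_le_sinh_iff.2 hb0
  have he : Real.exp b = Real.cosh b + Real.sinh b := (Real.cosh_add_sinh b).symm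
  rw [he]
  have hp : 0 ≤ Real.cosh a - Real.sinh a := by rw [Real.cosh_sub_sinh]; positivity
  have hm : 0 ≤ Real.cosh a + Real.sinh a := by rw [Real.cosh_add_sinh]; positivity
  have e1 := mul_nonneg (mul_nonneg (sub_nonneg.2 hs) hp) (by linarith : 0 ≤ (1 + d) / 2)
  have e2 := mul_nonneg (mul_nonneg (sub_nonneg.2 hs) hm) (by linarith : 0 ≤ (1 - d) / 2)
  nlinarith

lemma aux_fact (k : ℕ) : 2 * 3 ^ k ≤ (k + 2).factorial := by
  induction k with
  | zero => simp
  | succ k ih =>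
    rw [show k + 1 + 2 = (k + 2) + 1 by ring, Nat.factorial_succ, pow_succ]
    nlinarith

lemma aux_exp_bound (y c : ℝ) (hy : 0 ≤ y) (hc : y / 3 ≤ c) (hc1 : c < 1) :
    Real.exp y - 1 - y ≤ y ^ 2 / (2 * (1 - c)) := by
  have h1 : HasSum (fun k : ℕ => y ^ k / (k.factorial : ℝ)) (Real.exp y) := by
    rw [Real.exp_eq_exp_ℝ]; exact NormedSpace.expSeries_div_hasSum_exp y
  have h2 := (hasSum_nat_add_iff' 2).2 h1
  have h3 := (hasSum_geometric_of_lt_one (by positivity : 0 ≤ y / 3) (by linarith)).mul_left (y ^ 2 / 2)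
  have h4 := hasSum_le (fun k => ?_) h2 h3
  · simp [Finset.sum_range_succ] at h4
    have h5 : y ^ 2 / 2 * (1 - y / 3)⁻¹ ≤ y ^ 2 / (2 * (1 - c)) := by
      rw [← div_eq_mul_inv, div_div]
      have : 0 < 1 - c := by linarith
      gcongr
    linarith
  · have hf : (2 * 3 ^ k : ℝ) ≤ ((k + 2).factorial : ℝ) := by exact_mod_cast aux_fact k
    rw [div_pow, div_mul_div_comm, pow_add, mul_comm (y ^ k)]
    gcongr

lemma aux_exp_neg (x : ℝ) (hx : 0 ≤ x) : Real.exp (-x) ≤ 1 - x + x ^ 2 / 2 := by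
  have h := Real.quadratic_le_exp_of_nonneg hx
  rw [Real.exp_neg, inv_le_comm₀ (Real.exp_pos x) (by nlinarith [sq_nonneg (x - 1)])]
  refine le_trans ?_ h
  rw [inv_le_iff_one_le_mul₀ (by nlinarith [sq_nonneg (x - 1)])]
  nlinarith [sq_nonneg (x ^ 2)]

section
variable {𝒳 H Ω : Type*} [MeasurableSpace 𝒳]
    [NormedAddCommGroup H] [InnerProductSpace ℝ H] [CompleteSpace H]
    [SecondCountableTopology H] [MeasurableSpace H] [BorelSpace H] [MeasurableSpace Ω]

lemma aux_step (ν : Measure 𝒳) [IsProbabilityMeasure ν] (f : 𝒳 → H) (hf : Measurable f) (B : ℝ)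
    (hB : ∀ x, ‖f x‖ ≤ B) (h0 : ∫ x, f x ∂ν = 0) (K : ℝ)
    (hK : ∫ x, (Real.exp ‖f x‖ - 1 - ‖f x‖) ∂ν ≤ K) (z : H) :
    ∫⁻ x, ENNReal.ofReal (Real.cosh ‖z + f x‖) ∂ν
      ≤ ENNReal.ofReal (Real.cosh ‖z‖) * ENNReal.ofReal (Real.exp K) := by
  have hfi : Integrable f ν := Integrable.of_bound hf.aestronglyMeasurable B (ae_of_all _ hB)
  have hni : Integrable (fun x => ‖f x‖) ν := hfi.norm
  have hei : Integrable (fun x => Real.exp ‖f x‖ - 1 - ‖f x‖) ν := by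
    refine Integrable.sub (Integrable.sub ?_ (integrable_const _)) hni
    refine Integrable.of_bound (by fun_prop) (Real.exp B) (ae_of_all _ fun x => ?_)
    rw [Real.norm_eq_abs, Real.abs_exp]
    exact Real.exp_le_exp.2 (hB x)
  have hii : Integrable (fun x => inner ℝ z (f x)) ν := hfi.const_inner z
  have hRi : Integrable (fun x => Real.cosh ‖z‖ + Real.sinh ‖z‖ / ‖z‖ * inner ℝ z (f x)
      + Real.cosh ‖z‖ * (Real.exp ‖f x‖ - 1 - ‖f x‖)) ν :=
    ((integrable_const _).add (hii.const_mul _)).add (hei.const_mul _)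
  calc ∫⁻ x, ENNReal.ofReal (Real.cosh ‖z + f x‖) ∂ν
      ≤ ∫⁻ x, ENNReal.ofReal (Real.cosh ‖z‖ + Real.sinh ‖z‖ / ‖z‖ * inner ℝ z (f x)
      + Real.cosh ‖z‖ * (Real.exp ‖f x‖ - 1 - ‖f x‖)) ∂ν :=
        lintegral_mono fun x => ENNReal.ofReal_le_ofReal (aux_cosh_norm_add _ _)
    _ = ENNReal.ofReal (∫ x, (Real.cosh ‖z‖ + Real.sinh ‖z‖ / ‖z‖ * inner ℝ z (f x)
      + Real.cosh ‖z‖ * (Real.exp ‖f x‖ - 1 - ‖f x‖)) ∂ν) := by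
        rw [ofReal_integral_eq_lintegral_ofReal hRi]
        exact ae_of_all _ fun x => (Real.cosh_pos _).le.trans (aux_cosh_norm_add _ _)
    _ ≤ _ := by
        rw [← ENNReal.ofReal_mul (Real.cosh_pos _).le]
        apply ENNReal.ofReal_le_ofReal
        have hA : Integrable (fun x => Real.cosh ‖z‖ + Real.sinh ‖z‖ / ‖z‖ * inner ℝ z (f x)) ν :=
          (integrable_const _).add (hii.const_mul _)
        rw [integral_add hA (hei.const_mul _),
          integral_add (integrable_const _) (hii.const_mul _), integral_const_mul,
          integral_const_mul, integral_inner hfi, h0]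
        simp only [inner_zero_right, mul_zero, integral_const, probReal_univ, smul_eq_mul, one_mul,
          add_zero]
        have := Real.add_one_le_exp K
        nlinarith [Real.cosh_pos ‖z‖]

lemma aux_mgf (P : Measure Ω) [IsProbabilityMeasure P] (ν : Measure 𝒳) [IsProbabilityMeasure ν]
    (f : 𝒳 → H) (hf : Measurable f) (B : ℝ)
    (hB : ∀ x, ‖f x‖ ≤ B) (h0 : ∫ x, f x ∂ν = 0) (K : ℝ)
    (hK : ∫ x, (Real.exp ‖f x‖ - 1 - ‖f x‖) ∂ν ≤ K)
    (X : ℕ → Ω → 𝒳) (hXmeas : ∀ t, Measurable (X t))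
    (hXlaw : ∀ t, Measure.map (X t) P = ν)
    (hXindep : iIndepFun X P) (n : ℕ) :
    ∫⁻ ω, ENNReal.ofReal (Real.cosh ‖∑ t ∈ range n, f (X t ω)‖) ∂P
      ≤ ENNReal.ofReal (Real.exp (n * K)) := by
  induction n with
  | zero => simp
  | succ k ih =>
    have hm : ∀ t, Measurable (fun ω => f (X t ω)) := fun t => hf.comp (hXmeas t)
    have hind : iIndepFun (fun t ω => f (X t ω)) P := hXindep.comp (fun _ => f) (fun _ => hf)
    have hSm : Measurable (fun ω => ∑ t ∈ range k, f (X t ω)) :=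
      Finset.measurable_fun_sum _ fun t _ => hm t
    have hi : IndepFun (fun ω => ∑ t ∈ range k, f (X t ω)) (fun ω => f (X k ω)) P := by
      have := hind.indepFun_finsetSum_of_notMem hm (s := range k) (i := k) (by simp)
      convert this using 1
      ext ω; simp
    have hprod := (indepFun_iff_map_prod_eq_prod_map_map hSm.aemeasurable (hm k).aemeasurable).1 hi
    have hlaw : P.map (fun ω => f (X k ω)) = ν.map f := by
      rw [← hXlaw k, Measure.map_map hf (hXmeas k)]; rfl
    have hg : Measurable (fun p : H × H => ENNReal.ofReal (Real.cosh ‖p.1 + p.2‖)) := by fun_prop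
    have hg1 : Measurable (fun p : H => ENNReal.ofReal (Real.cosh ‖p‖)) := by fun_prop
    have hpν : IsProbabilityMeasure (ν.map f) := Measure.isProbabilityMeasure_map hf.aemeasurable
    calc ∫⁻ ω, ENNReal.ofReal (Real.cosh ‖∑ t ∈ range (k + 1), f (X t ω)‖) ∂P
        = ∫⁻ p, ENNReal.ofReal (Real.cosh ‖p.1 + p.2‖) ∂(P.map
            (fun ω => (∑ t ∈ range k, f (X t ω), f (X k ω)))) := by
          rw [lintegral_map hg (hSm.prodMk (hm k))]
          simp [Finset.sum_range_succ]
      _ = ∫⁻ z, ∫⁻ y, ENNReal.ofReal (Real.cosh ‖z + y‖) ∂(ν.map f)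
            ∂(P.map (fun ω => ∑ t ∈ range k, f (X t ω))) := by
          rw [hprod, hlaw, lintegral_prod _ hg.aemeasurable]
      _ ≤ ∫⁻ z, ENNReal.ofReal (Real.cosh ‖z‖) * ENNReal.ofReal (Real.exp K)
            ∂(P.map (fun ω => ∑ t ∈ range k, f (X t ω))) := by
          refine lintegral_mono fun z => ?_
          rw [lintegral_map (by fun_prop) hf]
          exact aux_step ν f hf B hB h0 K hK z
      _ = (∫⁻ ω, ENNReal.ofReal (Real.cosh ‖∑ t ∈ range k, f (X t ω)‖) ∂P)
            * ENNReal.ofReal (Real.exp K) := by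
          rw [lintegral_mul_const _ hg1, lintegral_map hg1 hSm]
      _ ≤ ENNReal.ofReal (Real.exp (k * K)) * ENNReal.ofReal (Real.exp K) := by gcongr
      _ = _ := by
          rw [← ENNReal.ofReal_mul (Real.exp_pos _).le, ← Real.exp_add]
          congr 2; push_cast; ring

/-- Pinelis-type Bernstein inequality. -/
lemma aux_bernstein (P : Measure Ω) [IsProbabilityMeasure P] (ν : Measure 𝒳)
    [IsProbabilityMeasure ν]
    (f : 𝒳 → H) (hf : Measurable f) (B : ℝ) (hB0 : 0 ≤ B)
    (hB : ∀ x, ‖f x‖ ≤ B) (h0 : ∫ x, f x ∂ν = 0) (V : ℝ) (hV0 : 0 < V)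
    (hV : ∫ x, ‖f x‖ ^ 2 ∂ν ≤ V)
    (X : ℕ → Ω → 𝒳) (hXmeas : ∀ t, Measurable (X t))
    (hXlaw : ∀ t, Measure.map (X t) P = ν)
    (hXindep : iIndepFun X P) (n : ℕ) (hn : 0 < n) (L : ℝ) (hL : 0 < L) :
    P {ω | √(2 * (n * V) * L) + B / 3 * L ≤ ‖∑ t ∈ range n, f (X t ω)‖}
      ≤ ENNReal.ofReal (2 * Real.exp (-L)) := by
  have hn' : (0:ℝ) < n := by exact_mod_cast hn
  set v : ℝ := n * V with hv
  have hv0 : 0 < v := by positivity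
  set w := √(2 * v * L) with hw
  have hw0 : 0 < w := by positivity
  have hw2 : w ^ 2 = 2 * v * L := Real.sq_sqrt (by positivity)
  -- the parameter
  set l : ℝ := w / (v + B / 3 * w) with hl
  have hden : 0 < v + B / 3 * w := by positivity
  have hl0 : 0 < l := by positivity
  have hlc : 1 - l * B / 3 = v / (v + B / 3 * w) := by rw [hl]; field_simp; ring
  have hlc0 : 0 < 1 - l * B / 3 := by rw [hlc]; positivity
  set K : ℝ := l ^ 2 * V / (2 * (1 - l * B / 3)) with hKdef
  have hbd : Integrable (fun x => ‖f x‖ ^ 2) ν := by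
    refine Integrable.of_bound (by fun_prop) (B ^ 2) (ae_of_all _ fun x => ?_)
    rw [Real.norm_eq_abs, abs_of_nonneg (by positivity)]
    have := hB x
    gcongr
  have hK : ∫ x, (Real.exp ‖l • f x‖ - 1 - ‖l • f x‖) ∂ν ≤ K := by
    calc _ ≤ ∫ x, l ^ 2 / (2 * (1 - l * B / 3)) * ‖f x‖ ^ 2 ∂ν := by
          refine integral_mono_of_nonneg (ae_of_all _ fun x => ?_) (hbd.const_mul _)
            (ae_of_all _ fun x => ?_)
          · have := Real.add_one_le_exp ‖l • f x‖
            simp only [Pi.zero_apply]; linarith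
          · have hnn : ‖l • f x‖ = l * ‖f x‖ := by rw [norm_smul, Real.norm_of_nonneg hl0.le]
            have := aux_exp_bound ‖l • f x‖ (l * B / 3) (norm_nonneg _)
              (by rw [hnn]; have := hB x; gcongr) (by linarith)
            refine this.trans (le_of_eq ?_)
            rw [hnn]; ring
      _ = l ^ 2 / (2 * (1 - l * B / 3)) * ∫ x, ‖f x‖ ^ 2 ∂ν := integral_const_mul _ _
      _ ≤ l ^ 2 / (2 * (1 - l * B / 3)) * V := by gcongr
      _ = K := by rw [hKdef]; ring
  have hmgf := aux_mgf P ν (fun x => l • f x) (hf.const_smul l) (l * B)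
    (fun x => by rw [norm_smul, Real.norm_of_nonneg hl0.le]; have := hB x; gcongr)
    (by rw [integral_smul, h0, smul_zero]) K hK X hXmeas hXlaw hXindep n
  set r := w + B / 3 * L with hr
  have hkey : n * K - l * r = -L := by
    have : n * K = l ^ 2 * v / (2 * (1 - l * B / 3)) := by rw [hKdef, hv]; ring
    rw [this, hlc, hr, hl]
    have hL2 : L = w ^ 2 / (2 * v) := by rw [hw2]; field_simp
    rw [hL2]
    field_simp
    ring
  have hSm : Measurable (fun ω => ENNReal.ofReal (Real.cosh ‖∑ t ∈ range n, l • f (X t ω)‖)) := by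
    have : Measurable (fun ω => ∑ t ∈ range n, l • f (X t ω)) :=
      Finset.measurable_fun_sum _ fun t _ => (hf.comp (hXmeas t)).const_smul l
    fun_prop
  have hmk := meas_ge_le_lintegral_div (μ := P) hSm.aemeasurable
    (ε := ENNReal.ofReal (Real.exp (l * r) / 2)) (by simp; positivity) ENNReal.ofReal_ne_top
  refine (measure_mono ?_).trans (hmk.trans ((ENNReal.div_le_div_right hmgf _).trans ?_))
  · intro ω hω
    simp only [Set.mem_ofPred_eq] at hω ⊢
    apply ENNReal.ofReal_le_ofReal
    rw [← Finset.smul_sum, norm_smul, Real.norm_of_nonneg hl0.le, Real.cosh_eq]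
    have : Real.exp (l * r) ≤ Real.exp (l * ‖∑ t ∈ range n, f (X t ω)‖) := by
      apply Real.exp_le_exp.2; gcongr
    have := Real.exp_pos (-(l * ‖∑ t ∈ range n, f (X t ω)‖))
    linarith
  · rw [← ENNReal.ofReal_div_of_pos (by positivity)]
    apply ENNReal.ofReal_le_ofReal
    rw [← hkey, Real.exp_sub]
    apply le_of_eq
    field_simp

/-- Lower tail for nonnegative bounded variables. -/
lemma aux_lower (P : Measure Ω) [IsProbabilityMeasure P] (ν : Measure 𝒳)
    [IsProbabilityMeasure ν]
    (Z : 𝒳 → ℝ) (hZ : Measurable Z) (b : ℝ) (hb0 : 0 < b) (hZ0 : ∀ x, 0 ≤ Z x)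
    (hZb : ∀ x, Z x ≤ b) (V : ℝ) (hV0 : 0 < V) (hV : ∫ x, Z x ∂ν = V)
    (X : ℕ → Ω → 𝒳) (hXmeas : ∀ t, Measurable (X t))
    (hXlaw : ∀ t, Measure.map (X t) P = ν)
    (hXindep : iIndepFun X P) (n : ℕ) (hn : 0 < n) (L : ℝ) (hL : 0 < L) :
    P {ω | ∑ t ∈ range n, Z (X t ω) ≤ n * V - √(2 * b * (n * V) * L)}
      ≤ ENNReal.ofReal (Real.exp (-L)) := by
  have hn' : (0:ℝ) < n := by exact_mod_cast hn
  set w := √(2 * b * (n * V) * L) with hw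
  have hw0 : 0 < w := by positivity
  have hw2 : w ^ 2 = 2 * b * (n * V) * L := Real.sq_sqrt (by positivity)
  set s : ℝ := w / (b * (n * V)) with hs
  have hs0 : 0 < s := by positivity
  have hm : ∀ t, Measurable (fun ω => Z (X t ω)) := fun t => hZ.comp (hXmeas t)
  have hind : iIndepFun (fun t ω => Z (X t ω)) P := hXindep.comp (fun _ => Z) (fun _ => hZ)
  have hZi : Integrable Z ν := Integrable.of_bound hZ.aestronglyMeasurable b
    (ae_of_all _ fun x => by rw [Real.norm_of_nonneg (hZ0 x)]; exact hZb x)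
  have hone : ∀ t, mgf (fun ω => Z (X t ω)) P (-s) ≤ Real.exp (-s * V + s ^ 2 * b * V / 2) := by
    intro t
    have : mgf (fun ω => Z (X t ω)) P (-s) = ∫ x, Real.exp (-s * Z x) ∂ν := by
      rw [mgf, ← hXlaw t, integral_map (hXmeas t).aemeasurable (by fun_prop)]
    rw [this]
    calc _ ≤ ∫ x, (1 + (-s + s ^ 2 * b / 2) * Z x) ∂ν := by
          refine integral_mono_of_nonneg (ae_of_all _ fun x => (Real.exp_pos _).le)
            ((integrable_const _).add (hZi.const_mul _)) (ae_of_all _ fun x => ?_)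
          have h1 := aux_exp_neg (s * Z x) (mul_nonneg hs0.le (hZ0 x))
          have h2 : Z x ^ 2 ≤ b * Z x := by nlinarith [hZ0 x, hZb x]
          have h3 : s ^ 2 * Z x ^ 2 ≤ s ^ 2 * (b * Z x) := by gcongr
          simp only [neg_mul]
          nlinarith
      _ = 1 + (-s + s ^ 2 * b / 2) * V := by
          rw [integral_add (integrable_const _) (hZi.const_mul _), integral_const_mul, hV]; simp
      _ ≤ _ := by
          have := Real.add_one_le_exp (-s * V + s ^ 2 * b * V / 2)
          linarith
  have hmgf : mgf (∑ t ∈ range n, fun ω => Z (X t ω)) P (-s)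
      ≤ Real.exp (n * (-s * V + s ^ 2 * b * V / 2)) := by
    rw [hind.mgf_sum hm, Real.exp_nat_mul]
    calc _ ≤ ∏ t ∈ range n, Real.exp (-s * V + s ^ 2 * b * V / 2) :=
          Finset.prod_le_prod (fun _ _ => mgf_nonneg) (fun t _ => hone t)
      _ = _ := by simp
  have hint : Integrable (fun ω => Real.exp (-s * (∑ t ∈ range n, fun ω => Z (X t ω)) ω)) P := by
    have hmm : Measurable (∑ t ∈ range n, fun ω => Z (X t ω)) := by
      rw [Finset.sum_fn]
      exact Finset.measurable_fun_sum _ fun t _ => hm t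
    refine Integrable.of_bound (by fun_prop) 1 (ae_of_all _ fun ω => ?_)
    rw [Real.norm_eq_abs, Real.abs_exp, Real.exp_le_one_iff]
    have : 0 ≤ (∑ t ∈ range n, fun ω => Z (X t ω)) ω := by
      rw [Finset.sum_apply]; exact Finset.sum_nonneg fun t _ => hZ0 _
    nlinarith
  have hch := measure_le_le_exp_mul_mgf (μ := P) (X := ∑ t ∈ range n, fun ω => Z (X t ω))
    (n * V - w) (by linarith : -s ≤ 0) hint
  have hfin : P.real {ω | (∑ t ∈ range n, fun ω => Z (X t ω)) ω ≤ n * V - w} ≤ Real.exp (-L) := by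
    refine hch.trans ?_
    calc _ ≤ Real.exp (- -s * (n * V - w)) * Real.exp (n * (-s * V + s ^ 2 * b * V / 2)) := by
          gcongr
      _ = Real.exp (-L) := by
          rw [← Real.exp_add]
          congr 1
          have hL2 : L = w ^ 2 / (2 * b * (n * V)) := by rw [hw2]; field_simp
          rw [hL2, hs]
          field_simp
          ring
  rw [← ENNReal.ofReal_toReal (measure_ne_top P _)]
  apply ENNReal.ofReal_le_ofReal
  simpa [Measure.real] using hfin

end

lemma aux_det (G w x m zb vh : ℝ) (hG : 0 < G) (hw : 0 < w) (hx1 : 3 * G * w < x) (hx2 : x ≤ G)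
    (hm0 : 0 ≤ m) (hm : m ≤ √2 * x * w + √2 / 3 * G * w ^ 2)
    (hz : x ^ 2 - 2 * G * x * w ≤ zb) (hv : zb - m ^ 2 ≤ vh) :
    m ≤ √(2 * vh * w ^ 2) + 16 / 3 * G * w ^ 2 := by
  have h2 : √2 ^ 2 = 2 := Real.sq_sqrt (by norm_num)
  have h2p : 0 < √2 := by positivity
  have h2l : √2 ≤ 1.5 := by
    rw [Real.sqrt_le_left (by norm_num)]; norm_num
  have hx0 : 0 < x := lt_of_le_of_lt (by positivity) hx1
  have hw3 : w ≤ 1 / 3 := by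
    by_contra h
    push Not at h
    nlinarith
  have hmm : m ^ 2 ≤ 2 * x ^ 2 * w ^ 2 + 4 / 3 * x * G * w ^ 3 + 2 / 9 * G ^ 2 * w ^ 4 := by
    calc m ^ 2 ≤ (√2 * x * w + √2 / 3 * G * w ^ 2) ^ 2 := by gcongr
      _ = √2 ^ 2 * (x * w + 1 / 3 * G * w ^ 2) ^ 2 := by ring
      _ = _ := by rw [h2]; ring
  have e0 : 0 < x * G * w := by positivity
  have e1 : x ^ 2 * w ^ 2 ≤ 1 / 3 * (x * G * w) := by
    calc x ^ 2 * w ^ 2 = x * w * (x * w) := by ring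
      _ ≤ x * w * (G * (1 / 3)) := by gcongr
      _ = _ := by ring
  have e2 : x * G * w ^ 3 ≤ 1 / 9 * (x * G * w) := by
    calc x * G * w ^ 3 = x * G * w * w ^ 2 := by ring
      _ ≤ x * G * w * (1 / 3) ^ 2 := by gcongr
      _ = _ := by ring
  have e4 : G ^ 2 * w ^ 2 ≤ 1 / 3 * (x * G * w) := by
    calc G ^ 2 * w ^ 2 = 1 / 3 * (3 * G * w) * (G * w) := by ring
      _ ≤ 1 / 3 * x * (G * w) := by gcongr
      _ = _ := by ring
  have e3 : G ^ 2 * w ^ 4 ≤ 1 / 27 * (x * G * w) := by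
    calc G ^ 2 * w ^ 4 = G ^ 2 * w ^ 2 * w ^ 2 := by ring
      _ ≤ 1 / 3 * (x * G * w) * (1 / 3) ^ 2 := by gcongr
      _ = _ := by ring
  have hvh : (x - 3 * G * w) ^ 2 ≤ vh := by nlinarith
  have hs : √2 * w * (x - 3 * G * w) ≤ √(2 * vh * w ^ 2) := by
    apply Real.le_sqrt_of_sq_le
    calc _ = √2 ^ 2 * (x - 3 * G * w) ^ 2 * w ^ 2 := by ring
      _ ≤ 2 * vh * w ^ 2 := by rw [h2]; gcongr
  have : √2 * (G * w ^ 2) ≤ 1.5 * (G * w ^ 2) := by gcongr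
  have : 0 < G * w ^ 2 := by positivity
  nlinarith

lemma aux_empVar {𝒳 H : Type*} [NormedAddCommGroup H] [InnerProductSpace ℝ H]
    (φ : 𝒳 → H) (n : ℕ) (hn : 2 ≤ n) (x : ℕ → 𝒳) (μ : H) :
    (n : ℝ)⁻¹ * ∑ t ∈ range n, ‖φ (x t) - μ‖ ^ 2 - ‖empKME φ n x - μ‖ ^ 2 ≤ empVar φ n x := by
  have hn' : (2:ℝ) ≤ n := by exact_mod_cast hn
  set S : H := ∑ t ∈ range n, φ (x t) with hS
  have h1 : ∑ t ∈ range n, ‖φ (x t) - μ‖ ^ 2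
      = ∑ t ∈ range n, ‖φ (x t)‖ ^ 2 - 2 * inner ℝ S μ + n * ‖μ‖ ^ 2 := by
    simp only [norm_sub_sq_real, Finset.sum_add_distrib, Finset.sum_sub_distrib, hS, sum_inner,
      Finset.mul_sum]
    simp
  have h2 : ‖empKME φ n x - μ‖ ^ 2
      = (n:ℝ)⁻¹ ^ 2 * ‖S‖ ^ 2 - 2 * ((n:ℝ)⁻¹ * inner ℝ S μ) + ‖μ‖ ^ 2 := by
    rw [empKME, norm_sub_sq_real, norm_smul, inner_smul_left, mul_pow]
    simp [hS]
  have h3 : empVar φ n x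
      = ((n : ℝ) - 1)⁻¹ * (∑ t ∈ range n, ‖φ (x t)‖ ^ 2 - (n:ℝ)⁻¹ * ‖S‖ ^ 2) := by
    rw [empVar, Finset.sum_sub_distrib, ← Finset.mul_sum, ← real_inner_self_eq_norm_sq S]
    simp only [kerG, hS, sum_inner, inner_sum, real_inner_self_eq_norm_sq]
    congr 3
    rw [Finset.sum_comm]
  have h4 : 0 ≤ ∑ t ∈ range n, ‖φ (x t)‖ ^ 2 - (n:ℝ)⁻¹ * ‖S‖ ^ 2 := by
    have a1 : ‖S‖ ≤ ∑ t ∈ range n, ‖φ (x t)‖ := norm_sum_le _ _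
    have a2 := sq_sum_le_card_mul_sum_sq (s := range n) (f := fun t => ‖φ (x t)‖)
    rw [Finset.card_range] at a2
    have a3 : ‖S‖ ^ 2 ≤ (∑ t ∈ range n, ‖φ (x t)‖) ^ 2 := by gcongr
    have : (n:ℝ)⁻¹ * ‖S‖ ^ 2 ≤ ∑ t ∈ range n, ‖φ (x t)‖ ^ 2 := by
      rw [inv_mul_le_iff₀ (by linarith)]; linarith
    linarith
  rw [h1, h2, h3]
  have h5 : (n:ℝ)⁻¹ ≤ ((n : ℝ) - 1)⁻¹ := by
    apply inv_anti₀ <;> linarith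
  have h6 := mul_le_mul_of_nonneg_right h5 h4
  refine le_trans (le_of_eq ?_) h6
  field_simp
  ring

lemma aux_kernel {𝒳 H : Type*} [AddCommGroup 𝒳] [NormedAddCommGroup H] [InnerProductSpace ℝ H]
    (φ : 𝒳 → H) (hφbdd : ∃ C : ℝ, ∀ x : 𝒳, ‖φ x‖ ≤ C)
    (hTI : ∃ Ψ : 𝒳 → ℝ, ∀ x y : 𝒳, kerG φ x y = Ψ (x - y)) :
    ∃ κ : ℝ, (∀ x, ‖φ x‖ ^ 2 = κ) ∧ ∀ x y, κ - kerRange φ ≤ inner ℝ (φ x) (φ y) := by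
  obtain ⟨C, hC⟩ := hφbdd
  obtain ⟨Ψ, hΨ⟩ := hTI
  have hκ : ∀ x, ‖φ x‖ ^ 2 = Ψ 0 := fun x => by
    have := hΨ x x
    rwa [sub_self, kerG, real_inner_self_eq_norm_sq] at this
  refine ⟨Ψ 0, hκ, fun x y => ?_⟩
  have hb : ∀ p : 𝒳 × 𝒳, |kerG φ p.1 p.2| ≤ C * C := fun p => by
    refine (abs_real_inner_le_norm _ _).trans ?_
    have h1 := hC p.1
    have h2 := hC p.2
    have := norm_nonneg (φ p.1)
    gcongr
    linarith
  have h1 : Ψ 0 ≤ ⨆ p : 𝒳 × 𝒳, kerG φ p.1 p.2 := by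
    have := le_ciSup (f := fun p : 𝒳 × 𝒳 => kerG φ p.1 p.2)
      ⟨C * C, by rintro _ ⟨p, rfl⟩; exact (abs_le.1 (hb p)).2⟩ (x, x)
    simpa [hΨ] using this
  have h2 : (⨅ p : 𝒳 × 𝒳, kerG φ p.1 p.2) ≤ kerG φ x y :=
    ciInf_le (f := fun p : 𝒳 × 𝒳 => kerG φ p.1 p.2)
      ⟨-(C * C), by rintro _ ⟨p, rfl⟩; exact (abs_le.1 (hb p)).1⟩ (x, y)
  have h3 : kerG φ x y = inner ℝ (φ x) (φ y) := rfl
  rw [kerRange]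
  linarith

/-- (Lemma A.3: variance-aware empirical concentration of the KME.) For i.i.d. samples
`X_1, …, X_n ∼ ν` and a bounded measurable feature map `φ` with translation-invariant
kernel, with probability at least `1 − δ'`,
`‖μ̂ − μ_ν‖ ≤ √(2 𝒱̂ log(4/δ')/n) + (16/3) √g̃ log(4/δ')/n`. -/
theorem varianceAware_empirical_KME_bound
    {𝒳 H Ω : Type*} [MeasurableSpace 𝒳] [AddCommGroup 𝒳]
    [NormedAddCommGroup H] [InnerProductSpace ℝ H] [CompleteSpace H]
    [SecondCountableTopology H] [MeasurableSpace H] [BorelSpace H] [MeasurableSpace Ω]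
    (P : Measure Ω) [IsProbabilityMeasure P]
    (φ : 𝒳 → H) (hφmeas : Measurable φ) (hφbdd : ∃ C : ℝ, ∀ x : 𝒳, ‖φ x‖ ≤ C)
    (hTI : ∃ Ψ : 𝒳 → ℝ, ∀ x y : 𝒳, kerG φ x y = Ψ (x - y))
    (ν : Measure 𝒳) [IsProbabilityMeasure ν]
    (n : ℕ) (hn : 2 ≤ n)
    (X : ℕ → Ω → 𝒳) (hXmeas : ∀ t, Measurable (X t))
    (hXlaw : ∀ t, Measure.map (X t) P = ν)
    (hXindep : iIndepFun X P)
    (δ' : ℝ) (hδ0 : 0 < δ') (hδ1 : δ' ≤ 1) :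
    ENNReal.ofReal (1 - δ') ≤
      P {ω | ‖empKME φ n (fun t => X t ω) - KME φ ν‖
          ≤ Real.sqrt (2 * empVar φ n (fun t => X t ω) * Real.log (4 / δ') / n)
            + (16 / 3) * Real.sqrt (kerRange φ) * (Real.log (4 / δ') / n)} := by
  obtain ⟨κ, hκ, hκg⟩ := aux_kernel φ hφbdd hTI
  obtain ⟨C, hC⟩ := hφbdd
  set g := kerRange φ with hg
  have hn' : (2:ℝ) ≤ n := by exact_mod_cast hn
  have hn0 : (0:ℝ) < n := by linarith
  set L := Real.log (4 / δ') with hL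
  have hL0 : 0 < L := Real.log_pos (by rw [lt_div_iff₀ hδ0]; linarith)
  have heL : Real.exp (-L) = δ' / 4 := by
    rw [Real.exp_neg, hL, Real.exp_log (by positivity), inv_div]
  have hg0 : 0 ≤ g := by
    have := hκg 0 0
    rw [real_inner_self_eq_norm_sq, hκ] at this
    linarith
  set μ := KME φ ν with hμ
  have hφi : Integrable φ ν :=
    Integrable.of_bound hφmeas.aestronglyMeasurable C (ae_of_all _ hC)
  -- diameter
  have hdiam : ∀ x y, ‖φ x - φ y‖ ≤ √(2 * g) := fun x y => by
    apply Real.le_sqrt_of_sq_le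
    rw [norm_sub_sq_real, hκ, hκ]
    have := hκg x y
    linarith
  set f : 𝒳 → H := fun x => φ x - μ with hf
  have hfm : Measurable f := hφmeas.sub_const μ
  have hfB : ∀ x, ‖f x‖ ≤ √(2 * g) := fun x => by
    have : f x = ∫ y, (φ x - φ y) ∂ν := by
      rw [integral_sub (integrable_const _) hφi]; simp [hf, hμ, KME]
    rw [this]
    have := norm_integral_le_of_norm_le_const (μ := ν) (f := fun y => φ x - φ y)
      (ae_of_all _ fun y => hdiam x y)
    simpa using this
  have hf0 : ∫ x, f x ∂ν = 0 := by
    rw [hf, integral_sub hφi (integrable_const _)]; simp [hμ, KME]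
  set V := ∫ x, ‖f x‖ ^ 2 ∂ν with hV
  have hV0 : 0 ≤ V := integral_nonneg fun x => by positivity
  have hVg : V ≤ g := by
    have hin : ∀ x, κ - g ≤ inner ℝ (φ x) μ := fun x => by
      have h1 : inner ℝ (φ x) μ = ∫ y, inner ℝ (φ x) (φ y) ∂ν := (integral_inner hφi _).symm
      rw [h1]
      have := integral_mono (μ := ν) (integrable_const (κ - g)) (hφi.const_inner (φ x))
        (fun y => hκg x y)
      simpa using this
    have hii : Integrable (fun x => inner ℝ (φ x) μ) ν := hφi.inner_const μ
    have hmm : ∫ x, inner ℝ (φ x) μ ∂ν = ‖μ‖ ^ 2 := by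
      have : ∀ x, inner ℝ (φ x) μ = inner ℝ μ (φ x) := fun x => real_inner_comm _ _
      simp_rw [this]
      rw [integral_inner hφi, ← real_inner_self_eq_norm_sq]; rfl
    have hmg : κ - g ≤ ‖μ‖ ^ 2 := by
      rw [← hmm]
      have := integral_mono (μ := ν) (integrable_const (κ - g)) hii hin
      simpa using this
    have : V = κ - ‖μ‖ ^ 2 := by
      have e : ∀ x, ‖f x‖ ^ 2 = (κ + ‖μ‖ ^ 2) - 2 * inner ℝ (φ x) μ := fun x => by
        rw [hf, norm_sub_sq_real, hκ]; ring
      rw [hV]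
      simp_rw [e]
      rw [integral_sub (integrable_const _) (hii.const_mul 2), integral_const_mul, hmm]
      simp
      ring
    linarith
  have hmean : ∀ ω, ‖empKME φ n (fun t => X t ω) - μ‖
      = (n:ℝ)⁻¹ * ‖∑ t ∈ range n, f (X t ω)‖ := fun ω => by
    have : empKME φ n (fun t => X t ω) - μ = (n:ℝ)⁻¹ • ∑ t ∈ range n, f (X t ω) := by
      rw [empKME, hf, Finset.sum_sub_distrib, smul_sub]
      simp only [Finset.sum_const, Finset.card_range, ← Nat.cast_smul_eq_nsmul ℝ, smul_smul]
      rw [inv_mul_cancel₀ hn0.ne', one_smul]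
    rw [this, norm_smul, Real.norm_of_nonneg (by positivity)]
  -- reduction to bad events
  set A := {ω | ‖empKME φ n (fun t => X t ω) - μ‖
          ≤ √(2 * empVar φ n (fun t => X t ω) * L / n) + (16 / 3) * √g * (L / n)} with hA
  have hred : ∀ E₁ E₂ : Set Ω, P E₁ ≤ ENNReal.ofReal (2 * Real.exp (-L)) →
      P E₂ ≤ ENNReal.ofReal (Real.exp (-L)) → (∀ ω, ω ∉ E₁ → ω ∉ E₂ → ω ∈ A) →
      ENNReal.ofReal (1 - δ') ≤ P A := by
    intro E₁ E₂ h1 h2 h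
    have hu : (1 : ENNReal) ≤ P A + ENNReal.ofReal δ' := by
      calc (1 : ENNReal) = P Set.univ := measure_univ.symm
        _ ≤ P (A ∪ (E₁ ∪ E₂)) := measure_mono fun ω _ => by
            by_cases q1 : ω ∈ E₁
            · exact Or.inr (Or.inl q1)
            by_cases q2 : ω ∈ E₂
            · exact Or.inr (Or.inr q2)
            exact Or.inl (h ω q1 q2)
        _ ≤ P A + (P E₁ + P E₂) :=
            (measure_union_le _ _).trans (add_le_add le_rfl (measure_union_le _ _))
        _ ≤ P A + (ENNReal.ofReal (2 * Real.exp (-L)) + ENNReal.ofReal (Real.exp (-L))) := by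
            gcongr
        _ ≤ P A + ENNReal.ofReal δ' := by
            rw [← ENNReal.ofReal_add (by positivity) (by positivity), heL]
            gcongr
            linarith
    rw [ENNReal.ofReal_sub _ hδ0.le, ENNReal.ofReal_one]
    exact tsub_le_iff_right.2 hu
  have hnp : 0 < n := by omega
  rcases eq_or_lt_of_le hg0 with hgz | hgp
  · -- degenerate kernel
    refine hred ∅ ∅ (by simp) (by simp) fun ω _ _ => ?_
    have : ∀ x, f x = 0 := fun x => by
      have := hfB x
      rw [← hgz] at this
      simpa using this
    rw [hA, Set.mem_ofPred_eq, hmean]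
    simp only [this, Finset.sum_const_zero, norm_zero, mul_zero]
    positivity
  -- notation
  set G := √g with hG
  have hGp : 0 < G := Real.sqrt_pos.2 hgp
  have hG2 : G ^ 2 = g := Real.sq_sqrt hg0
  set w := √(L / n) with hw
  have hwp : 0 < w := Real.sqrt_pos.2 (by positivity)
  have hw2 : w ^ 2 = L / n := Real.sq_sqrt (by positivity)
  have hLw : L = n * w ^ 2 := by rw [hw2]; field_simp
  have hBG : √(2 * g) = √2 * G := Real.sqrt_mul (by norm_num) g
  have h2 : √2 ^ 2 = 2 := Real.sq_sqrt (by norm_num)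
  have h2p : 0 < √2 := by positivity
  have h2l : √2 ≤ 1.5 := by
    rw [Real.sqrt_le_left (by norm_num)]; norm_num
  -- Bernstein in normalized form
  have hbern : ∀ x : ℝ, 0 < x → V ≤ x ^ 2 →
      P {ω | √2 * x * w + √2 / 3 * G * w ^ 2 ≤ ‖empKME φ n (fun t => X t ω) - μ‖}
        ≤ ENNReal.ofReal (2 * Real.exp (-L)) := by
    intro x hx hVx
    refine le_trans (measure_mono ?_) (aux_bernstein P ν f hfm (√(2 * g)) (by positivity) hfB hf0
      (x ^ 2) (by positivity) hVx X hXmeas hXlaw hXindep n hnp L hL0)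
    intro ω hω
    rw [Set.mem_ofPred_eq, hmean] at hω
    rw [Set.mem_ofPred_eq]
    have e : √(2 * (n * x ^ 2) * L) = n * (√2 * x * w) := by
      rw [Real.sqrt_eq_iff_mul_self_eq_of_pos (by positivity), hLw]
      calc _ = √2 ^ 2 * (n ^ 2 * x ^ 2 * w ^ 2) := by ring
        _ = _ := by rw [h2]; ring
    rw [e, hBG]
    rw [le_inv_mul_iff₀ hn0] at hω
    refine le_trans (le_of_eq ?_) hω
    rw [hLw]
    ring
  have hgoal : ∀ ω, ω ∈ A ↔ ‖empKME φ n (fun t => X t ω) - μ‖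
      ≤ √(2 * empVar φ n (fun t => X t ω) * w ^ 2) + 16 / 3 * G * w ^ 2 := fun ω => by
    rw [hA, Set.mem_ofPred_eq, hw2, mul_div_assoc]
  by_cases hcase : V ≤ (3 * G * w) ^ 2
  · refine hred _ ∅ (hbern (3 * G * w) (by positivity) hcase) (by simp) fun ω h1 _ => ?_
    rw [hgoal]
    rw [Set.mem_ofPred_eq, not_le] at h1
    have : √2 * (G * w ^ 2) ≤ 1.5 * (G * w ^ 2) := by gcongr
    have := Real.sqrt_nonneg (2 * empVar φ n (fun t => X t ω) * w ^ 2)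
    have : 0 < G * w ^ 2 := by positivity
    nlinarith
  · push Not at hcase
    have hVp : 0 < V := lt_of_le_of_lt (by positivity) hcase
    set x := √V with hx
    have hxp : 0 < x := Real.sqrt_pos.2 hVp
    have hx2 : x ^ 2 = V := Real.sq_sqrt hV0
    have hlow := aux_lower P ν (fun x => ‖f x‖ ^ 2) (by fun_prop) (2 * g) (by positivity)
      (fun x => by positivity)
      (fun x => by
        have := hfB x
        calc ‖f x‖ ^ 2 ≤ √(2 * g) ^ 2 := by gcongr
          _ = 2 * g := Real.sq_sqrt (by positivity)) V hVp rfl X hXmeas hXlaw hXindep n hnp L hL0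
    refine hred _ _ (hbern x hxp hx2.ge) hlow fun ω h1 h3 => ?_
    rw [hgoal]
    rw [Set.mem_ofPred_eq, not_le] at h1 h3
    have e : √(2 * (2 * g) * (n * V) * L) = n * (2 * G * x * w) := by
      rw [Real.sqrt_eq_iff_mul_self_eq_of_pos (by positivity), ← hx2, ← hG2, hLw]
      ring
    rw [e] at h3
    refine aux_det G w x _ ((n:ℝ)⁻¹ * ∑ t ∈ range n, ‖f (X t ω)‖ ^ 2) _ hGp hwp ?_ ?_
      (norm_nonneg _) h1.le ?_ (aux_empVar φ n hn (fun t => X t ω) μ)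
    · rw [← hx2] at hcase
      exact lt_of_pow_lt_pow_left₀ 2 hxp.le hcase
    · exact Real.sqrt_le_sqrt hVg
    · rw [le_inv_mul_iff₀ hn0, hx2]
      linarith

end
end

section
/- (Lemma A.5: true-variance two-sample bound on the MMD.) Let 𝒳 be a measurable space, H a real separable Hilbert space, and φ : 𝒳 → H a bounded measurable feature map; let g(x,y) := ⟨φ(x), φ(y)⟩ with supremum ḡ := sup_{x,y} g(x,y). Let ν_i, ν_j be probability measures on 𝒳 with KMEs μ_i, μ_j and RKHS variances 𝒱*_i := E_{X∼ν_i}[‖φ(X) − μ_i‖²], 𝒱*_j := E_{X∼ν_j}[‖φ(X) − μ_j‖²]. Let X^i_1,…,X^i_n and X^j_1,…,X^j_n be mutually independent with X^i_t ∼ ν_i and X^j_t ∼ ν_j i.i.d., n ≥ 1, and define μ̂_i := (1/n)Σ_t φ(X^i_t), μ̂_j := (1/n)Σ_t φ(X^j_t). Then for every δ ∈ (0,1], with probability at least 1 − δ, | ‖μ̂_j − μ̂_i‖ − ‖μ_j − μ_i‖ | ≤ (√𝒱*_i + √𝒱*_j)·√(2·log(4/δ)/n) + (8/3)·√ḡ·log(4/δ)/n.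 -/
open MeasureTheory ProbabilityTheory Finset

noncomputable section

/-- The supremum `ḡ = sup_{x,y} g(x,y)` of the kernel. -/
def kerSup {𝒳 H : Type*} [NormedAddCommGroup H] [InnerProductSpace ℝ H]
    (φ : 𝒳 → H) : ℝ :=
  ⨆ p : 𝒳 × 𝒳, kerG φ p.1 p.2

/-- The RKHS variance `𝒱*_ν = E_{X∼ν}[‖φ(X) − μ_ν‖²]`. -/
def Vstar {𝒳 H : Type*} [MeasurableSpace 𝒳] [NormedAddCommGroup H] [InnerProductSpace ℝ H]
    (φ : 𝒳 → H) (ν : Measure 𝒳) : ℝ :=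
  ∫ x, ‖φ x - KME φ ν‖ ^ 2 ∂ν

lemma aux_cosh_convex (r p q θ : ℝ) (h0 : 0 ≤ θ) (h1 : θ ≤ 1)
    (h : r ^ 2 = θ * p ^ 2 + (1 - θ) * q ^ 2) :
    Real.cosh r ≤ θ * Real.cosh p + (1 - θ) * Real.cosh q := by
  have hr := Real.hasSum_cosh r
  have hp := (Real.hasSum_cosh p).mul_left θ
  have hq := (Real.hasSum_cosh q).mul_left (1 - θ)
  refine hasSum_le (fun k => ?_) hr (hp.add hq)
  have hc := (convexOn_pow k (𝕜 := ℝ)).2 (Set.mem_Ici.2 (sq_nonneg p)) (Set.mem_Ici.2 (sq_nonneg q))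
    h0 (sub_nonneg.2 h1) (by ring)
  simp only [smul_eq_mul] at hc
  rw [← h] at hc
  rw [pow_mul, pow_mul, pow_mul, ← mul_div_assoc, ← mul_div_assoc, ← add_div]
  gcongr

lemma aux_cosh_scalar (a b c r : ℝ) (ha : 0 ≤ a) (hb : 0 ≤ b) (hc : |c| ≤ a * b)
    (hr : r ^ 2 = a ^ 2 + 2 * c + b ^ 2) :
    Real.cosh r ≤ Real.cosh a * (Real.exp b - b) + Real.sinh a / a * c := by
  have hsb : b ≤ Real.sinh b := Real.self_le_sinh_iff.2 hb
  have hexp : Real.exp b = Real.cosh b + Real.sinh b := (Real.cosh_add_sinh b).symm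
  have hca := Real.cosh_pos a
  rcases eq_or_lt_of_le (mul_nonneg ha hb) with h0 | h0
  · have hc0 : c = 0 := by
      rw [← h0] at hc
      exact abs_nonpos_iff.1 hc
    subst hc0
    rcases mul_eq_zero.1 h0.symm with h | h
    · subst h
      have : r ^ 2 = b ^ 2 := by rw [hr]; ring
      rw [← Real.cosh_abs r, (sq_eq_sq_iff_abs_eq_abs _ _).1 this, Real.cosh_abs]
      simp
      linarith
    · subst h
      have : r ^ 2 = a ^ 2 := by rw [hr]; ring
      rw [← Real.cosh_abs r, (sq_eq_sq_iff_abs_eq_abs _ _).1 this, Real.cosh_abs]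
      simp
  · have ha' : a ≠ 0 := fun h => by simp [h] at h0
    have hb' : b ≠ 0 := fun h => by simp [h] at h0
    obtain ⟨hc1, hc2⟩ := abs_le.1 hc
    have key := aux_cosh_convex r (a + b) (a - b) ((c / (a * b) + 1) / 2)
      (by have : -1 ≤ c / (a * b) := by rw [le_div_iff₀ h0]; linarith
          linarith)
      (by have : c / (a * b) ≤ 1 := by rw [div_le_iff₀ h0]; linarith
          linarith)
      (by rw [hr]; field_simp; ring)
    rw [Real.cosh_add, Real.cosh_sub] at key
    set u := c / (a * b) with hu
    have hcu : Real.sinh a / a * c = Real.sinh a * u * b := by rw [hu]; field_simp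
    have hu1 : u ≤ 1 := by rw [hu, div_le_iff₀ h0]; linarith
    have hsa : 0 ≤ Real.sinh a := Real.sinh_nonneg_iff.2 ha
    have hsc : Real.sinh a < Real.cosh a := Real.sinh_lt_cosh a
    have h3 : 0 ≤ (Real.cosh a - Real.sinh a * u) * (Real.sinh b - b) := by
      apply mul_nonneg _ (by linarith)
      nlinarith
    rw [hcu, hexp]
    nlinarith

lemma aux_cosh_step {H : Type*} [NormedAddCommGroup H] [InnerProductSpace ℝ H] (x d : H) :
    Real.cosh ‖x + d‖ ≤ Real.cosh ‖x‖ * (Real.exp ‖d‖ - ‖d‖)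
      + Real.sinh ‖x‖ / ‖x‖ * inner ℝ x d :=
  aux_cosh_scalar _ _ _ _ (norm_nonneg _) (norm_nonneg _) (abs_real_inner_le_norm x d)
    (norm_add_sq_real x d)

lemma aux_exp_bound_s13 (u B : ℝ) (h0 : 0 ≤ u) (huB : u ≤ B) (hB : B < 3) :
    Real.exp u - u ≤ 1 + u ^ 2 / (2 * (1 - B / 3)) := by
  have h1 : HasSum (fun n : ℕ => u ^ n / (n.factorial : ℝ)) (Real.exp u) := by
    rw [Real.exp_eq_exp_ℝ]; exact NormedSpace.expSeries_div_hasSum_exp u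
  have h2 := (hasSum_nat_add_iff' 2).2 h1
  have h3 : HasSum (fun n : ℕ => u ^ 2 / 2 * (u / 3) ^ n) (u ^ 2 / 2 * (1 - u / 3)⁻¹) :=
    (hasSum_geometric_of_lt_one (by linarith) (by linarith)).mul_left _
  have h4 := hasSum_le (fun n => ?_) h2 h3
  · simp [Finset.sum_range_succ] at h4
    have h5 : u ^ 2 / 2 * (1 - u / 3)⁻¹ ≤ u ^ 2 / (2 * (1 - B / 3)) := by
      rw [← div_eq_mul_inv, div_div]
      have : 0 < 1 - B / 3 := by linarith
      gcongr
    linarith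
  · have hf : (2 : ℝ) * 3 ^ n ≤ ((n + 2).factorial : ℝ) := by
      have := Nat.factorial_mul_pow_le_factorial (m := 2) (n := n)
      rw [add_comm n 2]
      exact_mod_cast this
    calc u ^ (n + 2) / ((n + 2).factorial : ℝ) ≤ u ^ (n + 2) / (2 * 3 ^ n) := by gcongr
      _ = _ := by rw [div_pow, pow_add]; field_simp

lemma aux_mgf_s13 {H Ω : Type*}
    [NormedAddCommGroup H] [InnerProductSpace ℝ H] [CompleteSpace H]
    [SecondCountableTopology H] [MeasurableSpace H] [BorelSpace H] [MeasurableSpace Ω]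
    (P : Measure Ω) [IsProbabilityMeasure P] (W : ℕ → Ω → H) (hW : ∀ t, Measurable (W t))
    (hind : iIndepFun W P) (B V : ℝ) (hB : B < 3) (hWB : ∀ t ω, ‖W t ω‖ ≤ B)
    (hmean : ∀ t, ∫ ω, W t ω ∂P = 0) (hV : ∀ t, ∫ ω, ‖W t ω‖ ^ 2 ∂P = V) (m : ℕ) :
    ∫⁻ ω, ENNReal.ofReal (Real.cosh ‖∑ t ∈ range m, W t ω‖) ∂P
      ≤ ENNReal.ofReal (1 + V / (2 * (1 - B / 3))) ^ m := by
  induction m with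
  | zero => simp
  | succ m ih =>
    have hI : IndepFun (∑ j ∈ range m, W j) (W m) P := by
      exact hind.indepFun_finsetSum_of_notMem hW (by simp)
    have hSm : Measurable (∑ j ∈ range m, W j) := by
      have h := Finset.measurable_fun_sum (range m) (fun i _ => hW i)
      convert h using 1
      ext ω
      simp
    have hmap := (indepFun_iff_map_prod_eq_prod_map_map hSm.aemeasurable (hW m).aemeasurable).1 hI
    have hG : Measurable (fun p : H × H => ENNReal.ofReal (Real.cosh ‖p.1 + p.2‖)) := by
      have : Measurable Real.cosh := Real.continuous_cosh.measurable
      fun_prop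
    have hG1 : Measurable (fun p : H => ENNReal.ofReal (Real.cosh ‖p‖)) := by
      have : Measurable Real.cosh := Real.continuous_cosh.measurable
      fun_prop
    have e1 : ∫⁻ ω, ENNReal.ofReal (Real.cosh ‖∑ t ∈ range (m + 1), W t ω‖) ∂P
        = ∫⁻ ω, ∫⁻ ω', ENNReal.ofReal (Real.cosh ‖∑ t ∈ range m, W t ω + W m ω'‖) ∂P ∂P := by
      have : ∫⁻ p, ENNReal.ofReal (Real.cosh ‖p.1 + p.2‖)
          ∂(Measure.map (fun ω => ((∑ j ∈ range m, W j) ω, W m ω)) P)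
          = ∫⁻ ω, ENNReal.ofReal (Real.cosh ‖∑ t ∈ range (m + 1), W t ω‖) ∂P := by
        rw [lintegral_map hG (hSm.prodMk (hW m))]
        simp [Finset.sum_range_succ]
      rw [← this, hmap, lintegral_prod _ hG.aemeasurable, lintegral_map _ hSm]
      · refine lintegral_congr (fun ω => ?_)
        have h := lintegral_map (μ := P)
          (hG.comp (measurable_prodMk_left (x := (∑ j ∈ range m, W j) ω))) (hW m)
        simp only [Function.comp_def] at h
        rw [h]
        simp
      · exact hG.lintegral_prod_right'
    have hint : Integrable (W m) P :=
      Integrable.of_bound (hW m).aestronglyMeasurable B (Filter.Eventually.of_forall (hWB m))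
    have hint2 : Integrable (fun ω => ‖W m ω‖ ^ 2) P :=
      Integrable.of_bound ((hW m).norm.pow_const 2).aestronglyMeasurable (B ^ 2)
        (Filter.Eventually.of_forall (fun ω => by
          rw [Real.norm_of_nonneg (by positivity)]
          have := hWB m ω
          gcongr))
    have hB3 : 0 < 1 - B / 3 := by linarith
    have hV0 : 0 ≤ V := by rw [← hV m]; exact integral_nonneg (fun ω => by positivity)
    have hin : ∀ x : H, ∫⁻ ω', ENNReal.ofReal (Real.cosh ‖x + W m ω'‖) ∂P
        ≤ ENNReal.ofReal (Real.cosh ‖x‖) * ENNReal.ofReal (1 + V / (2 * (1 - B / 3))) := by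
      intro x
      have hi1 : Integrable (fun ω => Real.cosh ‖x‖ * (1 + ‖W m ω‖ ^ 2 / (2 * (1 - B / 3)))) P :=
        ((integrable_const 1).add (hint2.div_const _)).const_mul _
      have hi2 : Integrable (fun ω => Real.sinh ‖x‖ / ‖x‖ * inner ℝ x (W m ω)) P :=
        (hint.const_inner x).const_mul _
      have hpt : ∀ ω, Real.cosh ‖x + W m ω‖ ≤
          Real.cosh ‖x‖ * (1 + ‖W m ω‖ ^ 2 / (2 * (1 - B / 3)))
            + Real.sinh ‖x‖ / ‖x‖ * inner ℝ x (W m ω) := by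
        intro ω
        have h1 := aux_cosh_step x (W m ω)
        have h2 := aux_exp_bound_s13 ‖W m ω‖ B (norm_nonneg _) (hWB m ω) hB
        have h3 := mul_le_mul_of_nonneg_left h2 (Real.cosh_pos ‖x‖).le
        linarith
      calc ∫⁻ ω', ENNReal.ofReal (Real.cosh ‖x + W m ω'‖) ∂P
          ≤ ∫⁻ ω, ENNReal.ofReal (Real.cosh ‖x‖ * (1 + ‖W m ω‖ ^ 2 / (2 * (1 - B / 3)))
            + Real.sinh ‖x‖ / ‖x‖ * inner ℝ x (W m ω)) ∂P :=
            lintegral_mono (fun ω => ENNReal.ofReal_le_ofReal (hpt ω))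
        _ = ENNReal.ofReal (∫ ω, (Real.cosh ‖x‖ * (1 + ‖W m ω‖ ^ 2 / (2 * (1 - B / 3)))
            + Real.sinh ‖x‖ / ‖x‖ * inner ℝ x (W m ω)) ∂P) := by
            refine (ofReal_integral_eq_lintegral_ofReal (hi1.add hi2) ?_).symm
            exact Filter.Eventually.of_forall
              (fun ω => (Real.cosh_pos _).le.trans (hpt ω))
        _ = ENNReal.ofReal (Real.cosh ‖x‖ * (1 + V / (2 * (1 - B / 3)))) := by
            rw [integral_add hi1 hi2, integral_const_mul, integral_const_mul,
              integral_add (integrable_const 1) (hint2.div_const _), integral_div, hV,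
              integral_inner hint, hmean]
            simp
        _ = _ := ENNReal.ofReal_mul (Real.cosh_pos _).le
    rw [e1]
    calc _ ≤ ∫⁻ ω, ENNReal.ofReal (Real.cosh ‖∑ t ∈ range m, W t ω‖)
            * ENNReal.ofReal (1 + V / (2 * (1 - B / 3))) ∂P := lintegral_mono (fun ω => hin _)
      _ = (∫⁻ ω, ENNReal.ofReal (Real.cosh ‖∑ t ∈ range m, W t ω‖) ∂P)
            * ENNReal.ofReal (1 + V / (2 * (1 - B / 3))) := by
          rw [lintegral_mul_const]
          have := hG1.comp hSm
          simpa [Function.comp_def] using this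
      _ ≤ _ := by rw [pow_succ]; gcongr

/-- Chernoff form. -/
lemma aux_chernoff {H Ω : Type*}
    [NormedAddCommGroup H] [InnerProductSpace ℝ H] [CompleteSpace H]
    [SecondCountableTopology H] [MeasurableSpace H] [BorelSpace H] [MeasurableSpace Ω]
    (P : Measure Ω) [IsProbabilityMeasure P] (Y : ℕ → Ω → H) (hY : ∀ t, Measurable (Y t))
    (hind : iIndepFun Y P) (M V : ℝ) (hYM : ∀ t ω, ‖Y t ω‖ ≤ M)
    (hmean : ∀ t, ∫ ω, Y t ω ∂P = 0) (hV : ∀ t, ∫ ω, ‖Y t ω‖ ^ 2 ∂P = V) (n : ℕ)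
    (l x : ℝ) (hl : 0 < l) (hlM : l * M < 3) (hx : 0 ≤ x) :
    P {ω | x < ‖∑ t ∈ range n, Y t ω‖}
      ≤ ENNReal.ofReal (2 * Real.exp (n * (l ^ 2 * V / (2 * (1 - l * M / 3))) - l * x)) := by
  have hV0 : 0 ≤ V := by rw [← hV 0]; exact integral_nonneg (fun ω => by positivity)
  have hB3 : 0 < 1 - l * M / 3 := by linarith
  have h := aux_mgf_s13 P (fun t ω => l • Y t ω) (fun t => (hY t).const_smul l)
    (hind.comp (fun _ y => l • y) (fun _ => measurable_const_smul l)) (l * M) (l ^ 2 * V) hlM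
    (fun t ω => by
      rw [norm_smul, Real.norm_of_nonneg hl.le]
      exact mul_le_mul_of_nonneg_left (hYM t ω) hl.le)
    (fun t => by rw [integral_smul, hmean, smul_zero])
    (fun t => by
      simp_rw [norm_smul, mul_pow, Real.norm_of_nonneg hl.le]
      rw [integral_const_mul, hV]) n
  set K := l ^ 2 * V / (2 * (1 - l * M / 3)) with hK
  have hK0 : 0 ≤ K := by positivity
  have hm : Measurable (fun ω => ENNReal.ofReal (Real.cosh ‖∑ t ∈ range n, l • Y t ω‖)) := by
    have : Measurable Real.cosh := Real.continuous_cosh.measurable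
    have h2 : ∀ t, Measurable (fun ω => l • Y t ω) := fun t => (hY t).const_smul l
    have h3 : Measurable (fun ω => ∑ t ∈ range n, l • Y t ω) :=
      Finset.measurable_fun_sum _ (fun t _ => h2 t)
    fun_prop
  have hpos : 0 < Real.exp (l * x) / 2 := by positivity
  have hmk := meas_ge_le_lintegral_div (μ := P) hm.aemeasurable
    (ε := ENNReal.ofReal (Real.exp (l * x) / 2)) (by simpa using hpos) ENNReal.ofReal_ne_top
  refine (measure_mono ?_).trans (hmk.trans ?_)
  · intro ω hω
    simp only [Set.mem_ofPred_eq] at hω ⊢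
    apply ENNReal.ofReal_le_ofReal
    rw [← Finset.smul_sum, norm_smul, Real.norm_of_nonneg hl.le]
    have : l * x ≤ l * ‖∑ t ∈ range n, Y t ω‖ := mul_le_mul_of_nonneg_left hω.le hl.le
    have h1 := Real.exp_le_exp.2 this
    rw [Real.cosh_eq]
    have := Real.exp_pos (-(l * ‖∑ t ∈ range n, Y t ω‖))
    linarith
  · refine (ENNReal.div_le_div_right h _).trans ?_
    rw [← ENNReal.ofReal_pow (by positivity), ← ENNReal.ofReal_div_of_pos hpos]
    apply ENNReal.ofReal_le_ofReal
    rw [div_le_iff₀ hpos, Real.exp_sub]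
    have : (1 + K) ^ n ≤ Real.exp (n * K) := by
      rw [Real.exp_nat_mul]
      gcongr
      linarith [Real.add_one_le_exp K]
    have h2 := Real.exp_pos (l * x)
    have e : 2 * (Real.exp (n * K) / Real.exp (l * x)) * (Real.exp (l * x) / 2)
        = Real.exp (n * K) := by field_simp
    rw [e]
    exact this

lemma aux_bernstein_s13 {H Ω : Type*}
    [NormedAddCommGroup H] [InnerProductSpace ℝ H] [CompleteSpace H]
    [SecondCountableTopology H] [MeasurableSpace H] [BorelSpace H] [MeasurableSpace Ω]
    (P : Measure Ω) [IsProbabilityMeasure P] (Y : ℕ → Ω → H) (hY : ∀ t, Measurable (Y t))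
    (hind : iIndepFun Y P) (M V : ℝ) (hYM : ∀ t ω, ‖Y t ω‖ ≤ M) (hM : 0 ≤ M)
    (hmean : ∀ t, ∫ ω, Y t ω ∂P = 0) (hV : ∀ t, ∫ ω, ‖Y t ω‖ ^ 2 ∂P = V) (n : ℕ) (hn : 1 ≤ n)
    (L : ℝ) (hL : 0 < L) :
    P {ω | Real.sqrt (2 * (n * V) * L) + 2 * (M / 3) * L < ‖∑ t ∈ range n, Y t ω‖}
      ≤ ENNReal.ofReal (2 * Real.exp (-L)) := by
  have hV0 : 0 ≤ V := by rw [← hV 0]; exact integral_nonneg (fun ω => by positivity)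
  have hn' : (0 : ℝ) < n := by exact_mod_cast hn
  rcases eq_or_lt_of_le hM with h0 | h0
  · have : ∀ t ω, Y t ω = 0 := fun t ω => by
      have := hYM t ω
      rw [← h0] at this
      exact norm_le_zero_iff.1 this
    have he : {ω | Real.sqrt (2 * (n * V) * L) + 2 * (M / 3) * L < ‖∑ t ∈ range n, Y t ω‖} = ∅ := by
      ext ω
      simp only [this, Finset.sum_const_zero, norm_zero, Set.mem_ofPred_eq, Set.mem_empty_iff_false,
        iff_false, not_lt]
      positivity
    rw [he]; simp
  rcases eq_or_lt_of_le hV0 with hv | hv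
  · have hlM : 3 / (2 * M) * M < 3 := by field_simp; norm_num
    refine (aux_chernoff P Y hY hind M V hYM hmean hV n (3 / (2 * M)) _ (by positivity) hlM
      (by positivity)).trans (le_of_eq ?_)
    rw [← hv]
    congr 3
    simp
    field_simp
  · set s := Real.sqrt (2 * L / (n * V)) with hs
    have hs2 : s ^ 2 = 2 * L / (n * V) := Real.sq_sqrt (by positivity)
    have hs0 : 0 < s := Real.sqrt_pos.2 (by positivity)
    have hx : Real.sqrt (2 * (n * V) * L) = n * V * s := by
      rw [Real.sqrt_eq_iff_mul_self_eq (by positivity) (by positivity)]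
      have : n * V * s * (n * V * s) = (n * V) ^ 2 * s ^ 2 := by ring
      rw [this, hs2]; field_simp
    have hLs : L = n * V * s ^ 2 / 2 := by rw [hs2]; field_simp
    have hD : 0 < 1 + M / 3 * s := by positivity
    have hlM' : 1 - s / (1 + M / 3 * s) * M / 3 = 1 / (1 + M / 3 * s) := by field_simp; ring
    have hlM : s / (1 + M / 3 * s) * M < 3 := by
      have : 0 < 1 / (1 + M / 3 * s) := by positivity
      linarith
    refine (aux_chernoff P Y hY hind M V hYM hmean hV n (s / (1 + M / 3 * s)) _ (by positivity) hlM
      (by positivity)).trans ?_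
    apply ENNReal.ofReal_le_ofReal
    gcongr
    rw [hx, hlM']
    have e : n * ((s / (1 + M / 3 * s)) ^ 2 * V / (2 * (1 / (1 + M / 3 * s))))
        = L / (1 + M / 3 * s) := by
      rw [hLs]; field_simp
    have e2 : s / (1 + M / 3 * s) * (n * V * s + 2 * (M / 3) * L)
        = (2 * L + 2 * (M / 3) * s * L) / (1 + M / 3 * s) := by
      have : s * (n * V * s) = 2 * L := by rw [hLs]; ring
      rw [← this]; field_simp
    rw [e, e2, ← sub_div, div_le_iff₀ hD]
    have : 0 ≤ M / 3 * s * L := by positivity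
    nlinarith

/-- One-sample bound. -/
lemma aux_one_sample
    {𝒳 H Ω : Type*} [MeasurableSpace 𝒳]
    [NormedAddCommGroup H] [InnerProductSpace ℝ H] [CompleteSpace H]
    [SecondCountableTopology H] [MeasurableSpace H] [BorelSpace H] [MeasurableSpace Ω]
    (P : Measure Ω) [IsProbabilityMeasure P]
    (φ : 𝒳 → H) (hφmeas : Measurable φ) (hφbdd : ∃ C : ℝ, ∀ x : 𝒳, ‖φ x‖ ≤ C)
    (ν : Measure 𝒳) [IsProbabilityMeasure ν]
    (n : ℕ) (hn : 1 ≤ n)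
    (X : ℕ → Ω → 𝒳) (hX : ∀ t, Measurable (X t)) (hlaw : ∀ t, Measure.map (X t) P = ν)
    (hind : iIndepFun X P) (L : ℝ) (hL : 0 < L) :
    P {ω | Real.sqrt (Vstar φ ν) * Real.sqrt (2 * L / n)
        + (4 / 3) * Real.sqrt (kerSup φ) * (L / n)
        < ‖empKME φ n (fun t => X t ω) - KME φ ν‖} ≤ ENNReal.ofReal (2 * Real.exp (-L)) := by
  obtain ⟨C, hC⟩ := hφbdd
  have hbd : BddAbove (Set.range (fun p : 𝒳 × 𝒳 => kerG φ p.1 p.2)) := by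
    refine ⟨C * C, ?_⟩
    rintro _ ⟨p, rfl⟩
    have h0 : 0 ≤ C := (norm_nonneg _).trans (hC p.1)
    exact (real_inner_le_norm _ _).trans
      (mul_le_mul (hC p.1) (hC p.2) (norm_nonneg _) h0)
  have hφ : ∀ x, ‖φ x‖ ≤ Real.sqrt (kerSup φ) := by
    intro x
    apply Real.le_sqrt_of_sq_le
    have := le_ciSup hbd (x, x)
    simpa [kerG, kerSup] using this
  have hμ : ‖KME φ ν‖ ≤ Real.sqrt (kerSup φ) := by
    have := norm_integral_le_of_norm_le_const (μ := ν) (Filter.Eventually.of_forall hφ)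
    simpa [KME] using this
  have hint : Integrable φ ν :=
    Integrable.of_bound hφmeas.aestronglyMeasurable _ (Filter.Eventually.of_forall hφ)
  have hψ : Measurable (fun x => φ x - KME φ ν) := hφmeas.sub_const _
  have h := aux_bernstein_s13 P (fun t ω => φ (X t ω) - KME φ ν) (fun t => hψ.comp (hX t))
    (hind.comp (fun _ x => φ x - KME φ ν) (fun _ => hψ)) (2 * Real.sqrt (kerSup φ)) (Vstar φ ν)
    (fun t ω => by
      have := norm_sub_le (φ (X t ω)) (KME φ ν)
      have := hφ (X t ω)
      linarith) (by positivity)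
    (fun t => by
      have := integral_map (μ := P) (hX t).aemeasurable (f := fun x => φ x - KME φ ν)
        hψ.aestronglyMeasurable
      rw [← this, hlaw, integral_sub hint (integrable_const _)]
      simp [KME])
    (fun t => by
      have := integral_map (μ := P) (hX t).aemeasurable (f := fun x => ‖φ x - KME φ ν‖ ^ 2)
        (hψ.norm.pow_const 2).aestronglyMeasurable
      rw [← this, hlaw]; rfl) n hn L hL
  refine (measure_mono ?_).trans h
  intro ω hω
  simp only [Set.mem_ofPred_eq] at hω ⊢
  have hn' : (0 : ℝ) < n := by exact_mod_cast hn
  have hV0 : 0 ≤ Vstar φ ν := integral_nonneg (fun ω => by positivity)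
  have e1 : ∑ t ∈ range n, (φ (X t ω) - KME φ ν)
      = (n : ℝ) • (empKME φ n (fun t => X t ω) - KME φ ν) := by
    rw [Finset.sum_sub_distrib, smul_sub, empKME, smul_smul, mul_inv_cancel₀ hn'.ne', one_smul]
    simp [Nat.cast_smul_eq_nsmul]
  have e2 : Real.sqrt (2 * (n * Vstar φ ν) * L)
      = n * (Real.sqrt (Vstar φ ν) * Real.sqrt (2 * L / n)) := by
    rw [← Real.sqrt_mul hV0, Real.sqrt_eq_iff_mul_self_eq (by positivity) (by positivity)]
    have := Real.mul_self_sqrt (show 0 ≤ Vstar φ ν * (2 * L / n) by positivity)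
    symm
    calc _ = (n : ℝ) ^ 2 * (Real.sqrt (Vstar φ ν * (2 * L / n))
              * Real.sqrt (Vstar φ ν * (2 * L / n))) := by ring
      _ = _ := by rw [this]; field_simp
  rw [e1, norm_smul, Real.norm_of_nonneg hn'.le, e2]
  calc _ = n * (Real.sqrt (Vstar φ ν) * Real.sqrt (2 * L / n)
        + (4 / 3) * Real.sqrt (kerSup φ) * (L / n)) := by field_simp; ring
    _ < _ := mul_lt_mul_of_pos_left hω hn'

/-- (Lemma A.5: true-variance two-sample bound on the MMD.) For mutually independent
i.i.d. samples `X^i_1,…,X^i_n ∼ ν_i` and `X^j_1,…,X^j_n ∼ ν_j`, with probability at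
least `1 − δ`,
`| ‖μ̂_j − μ̂_i‖ − ‖μ_j − μ_i‖ | ≤ (√𝒱*_i + √𝒱*_j) √(2 log(4/δ)/n) + (8/3) √ḡ log(4/δ)/n`. -/
theorem trueVariance_MMD_bound
    {𝒳 H Ω : Type*} [MeasurableSpace 𝒳]
    [NormedAddCommGroup H] [InnerProductSpace ℝ H] [CompleteSpace H]
    [SecondCountableTopology H] [MeasurableSpace H] [BorelSpace H] [MeasurableSpace Ω]
    (P : Measure Ω) [IsProbabilityMeasure P]
    (φ : 𝒳 → H) (hφmeas : Measurable φ) (hφbdd : ∃ C : ℝ, ∀ x : 𝒳, ‖φ x‖ ≤ C)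
    (νi νj : Measure 𝒳) [IsProbabilityMeasure νi] [IsProbabilityMeasure νj]
    (n : ℕ) (hn : 1 ≤ n)
    (Xi Xj : ℕ → Ω → 𝒳)
    (hXimeas : ∀ t, Measurable (Xi t)) (hXjmeas : ∀ t, Measurable (Xj t))
    (hXilaw : ∀ t, Measure.map (Xi t) P = νi)
    (hXjlaw : ∀ t, Measure.map (Xj t) P = νj)
    (hindep : iIndepFun (Sum.elim Xi Xj) P)
    (δ : ℝ) (hδ0 : 0 < δ) (hδ1 : δ ≤ 1) :
    ENNReal.ofReal (1 - δ) ≤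
      P {ω | |‖empKME φ n (fun t => Xj t ω) - empKME φ n (fun t => Xi t ω)‖
              - ‖KME φ νj - KME φ νi‖|
          ≤ (Real.sqrt (Vstar φ νi) + Real.sqrt (Vstar φ νj))
              * Real.sqrt (2 * Real.log (4 / δ) / n)
            + (8 / 3) * Real.sqrt (kerSup φ) * (Real.log (4 / δ) / n)} := by
  have hL : 0 < Real.log (4 / δ) := Real.log_pos (by rw [lt_div_iff₀ hδ0]; linarith)
  have hexp : 2 * Real.exp (-Real.log (4 / δ)) = δ / 2 := by
    rw [Real.exp_neg, Real.exp_log (by positivity)]; field_simp; norm_num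
  have hi := aux_one_sample P φ hφmeas hφbdd νi n hn Xi hXimeas hXilaw
    (hindep.precomp (g := Sum.inl) Sum.inl_injective) _ hL
  have hj := aux_one_sample P φ hφmeas hφbdd νj n hn Xj hXjmeas hXjlaw
    (hindep.precomp (g := Sum.inr) Sum.inr_injective) _ hL
  rw [hexp] at hi hj
  set A := {ω | Real.sqrt (Vstar φ νi) * Real.sqrt (2 * Real.log (4 / δ) / n)
        + (4 / 3) * Real.sqrt (kerSup φ) * (Real.log (4 / δ) / n)
        < ‖empKME φ n (fun t => Xi t ω) - KME φ νi‖} with hA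
  set B := {ω | Real.sqrt (Vstar φ νj) * Real.sqrt (2 * Real.log (4 / δ) / n)
        + (4 / 3) * Real.sqrt (kerSup φ) * (Real.log (4 / δ) / n)
        < ‖empKME φ n (fun t => Xj t ω) - KME φ νj‖} with hB
  set G := {ω | |‖empKME φ n (fun t => Xj t ω) - empKME φ n (fun t => Xi t ω)‖
              - ‖KME φ νj - KME φ νi‖|
          ≤ (Real.sqrt (Vstar φ νi) + Real.sqrt (Vstar φ νj))
              * Real.sqrt (2 * Real.log (4 / δ) / n)
            + (8 / 3) * Real.sqrt (kerSup φ) * (Real.log (4 / δ) / n)} with hG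
  have hcov : (Set.univ : Set Ω) ⊆ G ∪ (A ∪ B) := by
    intro ω _
    by_contra hcon
    simp only [Set.mem_union, not_or] at hcon
    obtain ⟨h1, h2, h3⟩ := hcon
    apply h1
    simp only [hA, hB, hG, Set.mem_ofPred_eq, not_lt] at h2 h3 ⊢
    refine (abs_norm_sub_norm_le _ _).trans ?_
    have e : empKME φ n (fun t => Xj t ω) - empKME φ n (fun t => Xi t ω)
        - (KME φ νj - KME φ νi) = (empKME φ n (fun t => Xj t ω) - KME φ νj)
        - (empKME φ n (fun t => Xi t ω) - KME φ νi) := by abel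
    rw [e]
    refine (norm_sub_le _ _).trans ?_
    linarith
  have h1 : (1 : ENNReal) ≤ P G + ENNReal.ofReal δ := by
    calc (1 : ENNReal) = P Set.univ := measure_univ.symm
      _ ≤ P (G ∪ (A ∪ B)) := measure_mono hcov
      _ ≤ P G + P (A ∪ B) := measure_union_le _ _
      _ ≤ P G + (P A + P B) := by gcongr; exact measure_union_le _ _
      _ ≤ P G + (ENNReal.ofReal (δ / 2) + ENNReal.ofReal (δ / 2)) := by gcongr
      _ = _ := by rw [← ENNReal.ofReal_add (by positivity) (by positivity), add_halves]
  rw [ENNReal.ofReal_sub _ hδ0.le, ENNReal.ofReal_one]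
  exact tsub_le_iff_right.2 h1

end
end
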